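/- Let k ≥ 0, 0 ≤ s ≤ k, r ≥ 1, and let 1 ≤ i₁ ≤ i₂ ≤ … ≤ i_{k+1} ≤ m and ℓ ≥ j₁ ≥ j₂ ≥ … ≥ j_{k+1} ≥ m. Among all multisets of k+1 variables containing exactly s variables of degree −r−1 and exactly k+1−s variables of degree −r, whose multiset of row indices of the colors is {i₁,…,i_{k+1}} and whose multiset of column indices is {j₁,…,j_{k+1}}, the minimum with respect to the order on finite multisets of variables is the multiset consisting of the variables x_{i_a, j_{s+1−a}}(−r−1) for 1 ≤ a ≤ s together with the variables x_{i_{s+a}, j_{k+2−a}}(−r) for 1 ≤ a ≤ k+1−s. -/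

import Mathlib

/-- The elements of a finite multiset over a linearly ordered set, listed in decreasing order. -/
def descList {X : Type*} [LinearOrder X] (M : Multiset X) : List X :=
  (M.sort (· ≤ ·)).reverse

/-- The order on finite multisets over a linearly ordered set: `M < N` iff, listing the
elements of each multiset in decreasing order, either at the first position where the two
lists differ the element of `M` is smaller than that of `N`, or the list of `M` is a proper
initial segment of the list of `N`. -/
def mlt {X : Type*} [LinearOrder X] (M N : Multiset X) : Prop :=
  List.Lex (· < ·) (descList M) (descList N)

/-- `M ≤ N` iff `M < N` or `M = N`. -/
def mle {X : Type*} [LinearOrder X] (M N : Multiset X) : Prop :=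
  mlt M N ∨ M = N

/-- A variable `x_{ij}(-r)` is encoded as the triple `(i, j, r) : ℕ × ℕ × ℕ`.  Variables are
linearly ordered by `x_{ij}(-r) < x_{i'j'}(-r')` iff `-r < -r'`, or (`r = r'` and
`(i,j) < (i',j')` as colors), where colors are ordered by `(i',j') < (i,j)` iff `i' > i`, or
(`i' = i` and `j' < j`).  This order is realized by the strictly monotone injection
`varKey (i,j,r) = (−r, (−i, j))` into `ℤ ×ₗ (ℤ ×ₗ ℤ)` (lexicographic order); the first
conjunct of the theorem below records this. -/
def varKey (v : ℕ × ℕ × ℕ) : ℤ ×ₗ (ℤ ×ₗ ℤ) :=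
  toLex (-(v.2.2 : ℤ), toLex (-(v.1 : ℤ), (v.2.1 : ℤ)))

/-- The claimed minimal multiset of variables (0-based indexing of the sequences `i`, `j`):
for positions `a < s`, the variable `x_{i_a, j_{s-1-a}}(-(r+1))` (1-based: `x_{i_a, j_{s+1-a}}(-r-1)`
for `1 ≤ a ≤ s`), and for positions `s ≤ a ≤ k`, the variable `x_{i_a, j_{k-a+s}}(-r)`
(1-based: `x_{i_{s+a}, j_{k+2-a}}(-r)` for `1 ≤ a ≤ k+1-s`). -/
def minMono (i j : ℕ → ℕ) (k s r : ℕ) : Multiset (ℕ × ℕ × ℕ) :=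
  (Finset.range (k + 1)).val.map
    (fun a => if a < s then (i a, j (s - 1 - a), r + 1) else (i a, j (k - a + s), r))

theorem lex_count {X : Type*} [LinearOrder X] {L₂ L₁ : List X}
    (h : List.Lex (· < ·) L₂ L₁) (h₂ : L₂.Pairwise (· ≥ ·)) (h₁ : L₁.Pairwise (· ≥ ·)) :
    ∃ x, (∀ y, x < y → L₁.count y = L₂.count y) ∧ L₂.count x < L₁.count x := by
  induction h with
  | @nil a l =>
    refine ⟨a, ?_, by simp⟩
    intro y hy
    rw [List.pairwise_cons] at h₁
    have : y ∉ a :: l := by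
      intro hm
      rcases List.mem_cons.1 hm with rfl | hm
      · exact lt_irrefl _ hy
      · exact absurd (h₁.1 y hm) (not_le.2 hy)
    rw [List.count_eq_zero_of_not_mem this]; simp
  | @cons a l₁ l₂ h ih =>
    rw [List.pairwise_cons] at h₁ h₂
    obtain ⟨x, hx, hlt⟩ := ih h₂.2 h₁.2
    refine ⟨x, fun y hy => ?_, ?_⟩
    · simp only [List.count_cons, hx y hy]
    · simp only [List.count_cons]; omega
  | @rel a l₁ b l₂ h =>
    rw [List.pairwise_cons] at h₁ h₂
    have key : ∀ y, b ≤ y → y ∉ a :: l₁ := by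
      intro y hy hm
      rcases List.mem_cons.1 hm with rfl | hm
      · exact absurd h (not_lt.2 hy)
      · exact absurd (lt_of_le_of_lt (h₂.1 y hm) h) (not_lt.2 hy)
    refine ⟨b, fun y hy => ?_, ?_⟩
    · rw [List.count_eq_zero_of_not_mem (key y hy.le)]
      apply List.count_eq_zero_of_not_mem
      intro hm
      rcases List.mem_cons.1 hm with rfl | hm
      · exact lt_irrefl _ hy
      · exact absurd (h₁.1 y hm) (not_le.2 hy)
    · rw [List.count_eq_zero_of_not_mem (key b le_rfl)]; simp

theorem descList_coe {X : Type*} [LinearOrder X] (M : Multiset X) :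
    (descList M : Multiset X) = M := by
  simp [descList]

theorem descList_pw {X : Type*} [LinearOrder X] (M : Multiset X) :
    (descList M).Pairwise (· ≥ ·) := by
  unfold descList
  rw [List.pairwise_reverse]
  exact M.pairwise_sort (· ≤ ·)

theorem descList_count {X : Type*} [LinearOrder X] (M : Multiset X) (x : X) :
    (descList M).count x = M.count x := by
  conv_rhs => rw [← descList_coe M]
  simp

theorem mle_of_count {X : Type*} [LinearOrder X] (M N : Multiset X)
    (h : ∀ x ∈ M, (∀ y, x < y → M.count y = N.count y) → M.count x ≤ N.count x) :
    mle M N := by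
  rcases trichotomous_of (List.Lex (α := X) (· < ·)) (descList M) (descList N) with h1 | h1 | h1
  · exact Or.inl h1
  · right
    rw [← descList_coe M, h1, descList_coe]
  · exfalso
    obtain ⟨x, hx, hlt⟩ := lex_count h1 (descList_pw N) (descList_pw M)
    simp only [descList_count] at hx hlt
    have hm : x ∈ M := Multiset.count_pos.1 (by omega)
    have := h x hm hx
    omega

theorem countP_split {α : Type*} (M : Multiset α) (p q : α → Prop)
    [DecidablePred p] [DecidablePred q] :
    M.countP p = M.countP (fun a => p a ∧ q a) + M.countP (fun a => p a ∧ ¬ q a) := by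
  induction M using Multiset.induction_on with
  | empty => simp
  | cons a s ih =>
    simp only [Multiset.countP_cons, ih]
    by_cases hp : p a <;> by_cases hq : q a <;> simp [hp, hq] <;> omega

theorem countP_agree {α : Type*} [DecidableEq α] (M N : Multiset α) (p : α → Prop)
    [DecidablePred p] (h : ∀ a, p a → M.count a = N.count a) : M.countP p = N.countP p := by
  rw [Multiset.countP_eq_card_filter, Multiset.countP_eq_card_filter]
  congr 1
  ext a
  simp only [Multiset.count_filter]
  split_ifs with hp
  · exact h a hp
  · rfl

theorem countP_mono' {α : Type*} (M : Multiset α) (p q : α → Prop)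
    [DecidablePred p] [DecidablePred q] (h : ∀ a ∈ M, p a → q a) : M.countP p ≤ M.countP q := by
  induction M using Multiset.induction_on with
  | empty => simp
  | cons a s ih =>
    have := ih (fun b hb => h b (Multiset.mem_cons_of_mem hb))
    have h2 := h a (Multiset.mem_cons_self a s)
    simp only [Multiset.countP_cons]
    split_ifs <;> first | omega | tauto

theorem countP_congr' {α : Type*} (M : Multiset α) (p q : α → Prop)
    [DecidablePred p] [DecidablePred q] (h : ∀ a ∈ M, p a ↔ q a) : M.countP p = M.countP q :=
  le_antisymm (countP_mono' M p q fun a ha => (h a ha).1)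
    (countP_mono' M q p fun a ha => (h a ha).2)

theorem varKey_lt (v w : ℕ × ℕ × ℕ) : varKey v < varKey w ↔
      (w.2.2 < v.2.2 ∨ (v.2.2 = w.2.2 ∧ (w.1 < v.1 ∨ (v.1 = w.1 ∧ v.2.1 < w.2.1)))) := by
  simp only [varKey, Prod.Lex.toLex_lt_toLex]
  omega

theorem varKey_inj : Function.Injective varKey := by
  rintro ⟨a, b, c⟩ ⟨a', b', c'⟩ h
  simp only [varKey, toLex_inj, Prod.mk.injEq] at h
  simp only [Prod.mk.injEq]
  omega

/-- The counting argument. -/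
theorem count_core (N M : Multiset (ℕ × ℕ × ℕ)) (p c D : ℕ)
    (hrow : ∀ v ∈ N, D ≤ v.2.2 → p < v.1 → v.2.2 = D)
    (hcol : ∀ v ∈ N, D ≤ v.2.2 → v.2.1 < c → v.2.2 = D ∧ v.1 ≤ p)
    (hD : N.countP (fun v => v.2.2 = D) = M.countP (fun v => v.2.2 = D))
    (hr : N.map (fun v => v.1) = M.map (fun v => v.1))
    (hc : N.map (fun v => v.2.1) = M.map (fun v => v.2.1))
    (hab : ∀ w : ℕ × ℕ × ℕ,
      (w.2.2 < D ∨ (w.2.2 = D ∧ (w.1 < p ∨ (w.1 = p ∧ c < w.2.1)))) → N.count w = M.count w) :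
    N.count (p, c, D) ≤ M.count (p, c, D) := by
  have R : N.countP (fun v => p < v.1) = M.countP (fun v => p < v.1) := by
    have := congrArg (Multiset.countP (fun x => p < x)) hr
    simpa only [Multiset.countP_map, ← Multiset.countP_eq_card_filter] using this
  have C : N.countP (fun v => v.2.1 < c) = M.countP (fun v => v.2.1 < c) := by
    have := congrArg (Multiset.countP (fun x => x < c)) hc
    simpa only [Multiset.countP_map, ← Multiset.countP_eq_card_filter] using this
  have R1 := countP_split N (fun v => p < v.1) (fun v => v.2.2 < D)
  have R2 := countP_split M (fun v => p < v.1) (fun v => v.2.2 < D)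
  have R3 : N.countP (fun v => p < v.1 ∧ v.2.2 < D) = M.countP (fun v => p < v.1 ∧ v.2.2 < D) :=
    countP_agree _ _ _ fun a ha => hab a (by omega)
  have R4 : N.countP (fun v => p < v.1 ∧ ¬ v.2.2 < D) = N.countP (fun v => v.2.2 = D ∧ ¬ v.1 ≤ p) :=
    countP_congr' _ _ _ fun v hv => by have := hrow v hv; omega
  have R5 : M.countP (fun v => v.2.2 = D ∧ ¬ v.1 ≤ p) ≤ M.countP (fun v => p < v.1 ∧ ¬ v.2.2 < D) :=
    countP_mono' _ _ _ fun v hv => by omega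
  have C1 := countP_split N (fun v => v.2.1 < c) (fun v => v.2.2 < D)
  have C2 := countP_split M (fun v => v.2.1 < c) (fun v => v.2.2 < D)
  have C3 : N.countP (fun v => v.2.1 < c ∧ v.2.2 < D) = M.countP (fun v => v.2.1 < c ∧ v.2.2 < D) :=
    countP_agree _ _ _ fun a ha => hab a (by omega)
  have C4 : N.countP (fun v => v.2.1 < c ∧ ¬ v.2.2 < D) =
      N.countP (fun v => (v.2.2 = D ∧ v.1 ≤ p) ∧ v.2.1 < c) :=
    countP_congr' _ _ _ fun v hv => by have := hcol v hv; omega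
  have C5 : M.countP (fun v => (v.2.2 = D ∧ v.1 ≤ p) ∧ v.2.1 < c) ≤
      M.countP (fun v => v.2.1 < c ∧ ¬ v.2.2 < D) :=
    countP_mono' _ _ _ fun v hv => by omega
  have D1 := countP_split N (fun v => v.2.2 = D) (fun v => v.1 ≤ p)
  have D2 := countP_split M (fun v => v.2.2 = D) (fun v => v.1 ≤ p)
  have E1 := countP_split N (fun v => v.2.2 = D ∧ v.1 ≤ p) (fun v => v.2.1 < c)
  have E2 := countP_split M (fun v => v.2.2 = D ∧ v.1 ≤ p) (fun v => v.2.1 < c)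
  have F1 := countP_split N (fun v => (v.2.2 = D ∧ v.1 ≤ p) ∧ ¬ v.2.1 < c)
    (fun v => v.1 = p ∧ v.2.1 = c)
  have F2 := countP_split M (fun v => (v.2.2 = D ∧ v.1 ≤ p) ∧ ¬ v.2.1 < c)
    (fun v => v.1 = p ∧ v.2.1 = c)
  have F3 : N.countP (fun v => ((v.2.2 = D ∧ v.1 ≤ p) ∧ ¬ v.2.1 < c) ∧ ¬ (v.1 = p ∧ v.2.1 = c)) =
      M.countP (fun v => ((v.2.2 = D ∧ v.1 ≤ p) ∧ ¬ v.2.1 < c) ∧ ¬ (v.1 = p ∧ v.2.1 = c)) :=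
    countP_agree _ _ _ fun a ha => hab a (by omega)
  have G : ∀ K : Multiset (ℕ × ℕ × ℕ), K.count (p, c, D) =
      K.countP (fun v => ((v.2.2 = D ∧ v.1 ≤ p) ∧ ¬ v.2.1 < c) ∧ (v.1 = p ∧ v.2.1 = c)) := by
    intro K
    unfold Multiset.count
    apply countP_congr'
    rintro ⟨x, y, z⟩ _
    simp only [Prod.mk.injEq]
    omega
  rw [G, G]
  omega

/-- let `k ≥ 0`, `0 ≤ s ≤ k`, `r ≥ 1`, `1 ≤ i₁ ≤ … ≤ i_{k+1} ≤ m` and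
`ℓ ≥ j₁ ≥ … ≥ j_{k+1} ≥ m` (0-based: `i`, `j` on `{0, …, k}`).  Among all multisets of `k+1`
variables containing exactly `s` variables of degree `−r−1` and exactly `k+1−s` of degree
`−r`, whose multiset of row indices is `{i₀, …, i_k}` and whose multiset of column indices
is `{j₀, …, j_k}`, the minimum with respect to the order on finite multisets of variables is
`minMono i j k s r`: it is such a multiset, and it is `≤` every such multiset. -/
theorem stmt16 (ℓ m k s r : ℕ) (hm : 1 ≤ m) (hml : m ≤ ℓ) (hs : s ≤ k) (hr : 1 ≤ r)
    (i j : ℕ → ℕ)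
    (hi : ∀ a ≤ k, 1 ≤ i a ∧ i a ≤ m) (hj : ∀ a ≤ k, m ≤ j a ∧ j a ≤ ℓ)
    (hmono : ∀ a < k, i a ≤ i (a + 1)) (hanti : ∀ a < k, j (a + 1) ≤ j a) :
    (∀ v w : ℕ × ℕ × ℕ, varKey v < varKey w ↔
      (w.2.2 < v.2.2 ∨ (v.2.2 = w.2.2 ∧ (w.1 < v.1 ∨ (v.1 = w.1 ∧ v.2.1 < w.2.1))))) ∧
    ((∀ v ∈ minMono i j k s r, v.2.2 = r ∨ v.2.2 = r + 1) ∧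
      (Multiset.filter (fun v => v.2.2 = r + 1) (minMono i j k s r)).card = s ∧
      (Multiset.filter (fun v => v.2.2 = r) (minMono i j k s r)).card = k + 1 - s ∧
      (minMono i j k s r).map (fun v => v.1) = (Finset.range (k + 1)).val.map i ∧
      (minMono i j k s r).map (fun v => v.2.1) = (Finset.range (k + 1)).val.map j) ∧
    (∀ M : Multiset (ℕ × ℕ × ℕ),
      (∀ v ∈ M, v.2.2 = r ∨ v.2.2 = r + 1) →
      (Multiset.filter (fun v => v.2.2 = r + 1) M).card = s →
      (Multiset.filter (fun v => v.2.2 = r) M).card = k + 1 - s →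
      M.map (fun v => v.1) = (Finset.range (k + 1)).val.map i →
      M.map (fun v => v.2.1) = (Finset.range (k + 1)).val.map j →
      mle ((minMono i j k s r).map varKey) (M.map varKey)) := by
  have hi' : ∀ a b, a ≤ b → b ≤ k → i a ≤ i b := by
    intro a b hab
    induction b, hab using Nat.le_induction with
    | base => intro _; exact le_rfl
    | succ b _ ih => intro hb; exact (ih (by omega)).trans (hmono b (by omega))
  have hj' : ∀ a b, a ≤ b → b ≤ k → j b ≤ j a := by
    intro a b hab
    induction b, hab using Nat.le_induction with
    | base => intro _; exact le_rfl
    | succ b _ ih => intro hb; exact (hanti b (by omega)).trans (ih (by omega))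
  have hmem : ∀ v ∈ minMono i j k s r, ∃ a, a ≤ k ∧
      ((a < s ∧ v = (i a, j (s - 1 - a), r + 1)) ∨ (s ≤ a ∧ v = (i a, j (k - a + s), r))) := by
    intro v hv
    simp only [minMono, Multiset.mem_map, Finset.mem_val, Finset.mem_range] at hv
    obtain ⟨a, ha, rfl⟩ := hv
    refine ⟨a, by omega, ?_⟩
    split_ifs with h
    · exact Or.inl ⟨h, rfl⟩
    · exact Or.inr ⟨by omega, rfl⟩
  have m1 : ∀ v ∈ minMono i j k s r, v.2.2 = r ∨ v.2.2 = r + 1 := by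
    intro v hv
    obtain ⟨a, _, ⟨_, rfl⟩ | ⟨_, rfl⟩⟩ := hmem v hv <;> simp
  have m2 : (Multiset.filter (fun v => v.2.2 = r + 1) (minMono i j k s r)).card = s := by
    rw [minMono, Multiset.filter_map, Multiset.card_map]
    have : Multiset.filter ((fun v : ℕ × ℕ × ℕ => v.2.2 = r + 1) ∘ (fun a =>
        if a < s then (i a, j (s - 1 - a), r + 1) else (i a, j (k - a + s), r)))
        (Finset.range (k + 1)).val = (Finset.range s).val := by
      rw [← Finset.filter_val]
      congr 1
      ext a
      simp only [Finset.mem_filter, Finset.mem_range, Function.comp]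
      split_ifs <;> simp <;> omega
    rw [this]; simp
  have m3 : (Multiset.filter (fun v => v.2.2 = r) (minMono i j k s r)).card = k + 1 - s := by
    rw [minMono, Multiset.filter_map, Multiset.card_map]
    have : Multiset.filter ((fun v : ℕ × ℕ × ℕ => v.2.2 = r) ∘ (fun a =>
        if a < s then (i a, j (s - 1 - a), r + 1) else (i a, j (k - a + s), r)))
        (Finset.range (k + 1)).val = (Finset.Ico s (k + 1)).val := by
      rw [← Finset.filter_val]
      congr 1
      ext a
      simp only [Finset.mem_filter, Finset.mem_range, Finset.mem_Ico, Function.comp]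
      split_ifs <;> simp <;> omega
    rw [this]; simp
  have m4 : (minMono i j k s r).map (fun v => v.1) = (Finset.range (k + 1)).val.map i := by
    rw [minMono, Multiset.map_map]
    apply Multiset.map_congr rfl
    intro a _
    simp only [Function.comp]
    split_ifs <;> rfl
  have m5 : (minMono i j k s r).map (fun v => v.2.1) = (Finset.range (k + 1)).val.map j := by
    rw [minMono, Multiset.map_map]
    refine Multiset.map_eq_map_of_bij_of_nodup _ _ (Finset.range (k + 1)).nodup
      (Finset.range (k + 1)).nodup (fun a _ => if a < s then s - 1 - a else k - a + s) ?_ ?_ ?_ ?_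
    · intro a ha
      simp only [Finset.mem_val, Finset.mem_range] at ha ⊢
      split_ifs <;> omega
    · intro a ha b hb
      simp only [Finset.mem_val, Finset.mem_range] at ha hb ⊢
      split_ifs <;> omega
    · intro b hb
      simp only [Finset.mem_val, Finset.mem_range] at hb ⊢
      refine ⟨if b < s then s - 1 - b else k - b + s, ?_, ?_⟩ <;> split_ifs <;> omega
    · intro a _
      simp only [Function.comp]
      split_ifs <;> rfl
  refine ⟨varKey_lt, ⟨m1, m2, m3, m4, m5⟩, ?_⟩
  intro M h1 h2 h3 h4 h5
  apply mle_of_count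
  intro x hx hab
  obtain ⟨⟨p, c, D⟩, hv, rfl⟩ := Multiset.mem_map.1 hx
  rw [Multiset.count_map_eq_count' _ _ varKey_inj, Multiset.count_map_eq_count' _ _ varKey_inj]
  have hDcase := m1 _ hv
  obtain ⟨a, hak, ha⟩ := hmem _ hv
  apply count_core
  · intro w hw hD hp
    obtain ⟨b, hbk, hb⟩ := hmem w hw
    rcases ha with ⟨has, ha⟩ | ⟨has, ha⟩ <;> rcases hb with ⟨hbs, rfl⟩ | ⟨hbs, rfl⟩ <;>
      simp only [Prod.mk.injEq] at ha hD hp ⊢ <;> try omega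
    have := hi' b a (by omega) hak
    omega
  · intro w hw hD hp
    obtain ⟨b, hbk, hb⟩ := hmem w hw
    rcases ha with ⟨has, ha⟩ | ⟨has, ha⟩ <;> rcases hb with ⟨hbs, rfl⟩ | ⟨hbs, rfl⟩ <;>
      simp only [Prod.mk.injEq] at ha hD hp ⊢
    · refine ⟨by omega, ?_⟩
      rcases le_total b a with h | h
      · have := hi' b a h hak
        omega
      · have := hj' (s - 1 - b) (s - 1 - a) (by omega) (by omega)
        omega
    · omega
    · have := hj' (s - 1 - b) (k - a + s) (by omega) (by omega)
      omega
    · refine ⟨by omega, ?_⟩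
      rcases le_total b a with h | h
      · have := hi' b a h hak
        omega
      · have := hj' (k - b + s) (k - a + s) (by omega) (by omega)
        omega
  · rw [Multiset.countP_eq_card_filter, Multiset.countP_eq_card_filter]
    rcases hDcase with h | h
    · simp only at h
      subst h
      rw [m3, h3]
    · simp only at h
      subst h
      rw [m2, h2]
  · rw [m4, h4]
  · rw [m5, h5]
  · intro w hw
    have := hab (varKey w) ((varKey_lt _ _).2 (by simp only; omega))
    rwa [Multiset.count_map_eq_count' _ _ varKey_inj,
      Multiset.count_map_eq_count' _ _ varKey_inj] at this
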